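/- arXiv:1003.0887 — 2 statements merged into one kernel-verified Lean document; each statement's English description precedes it below -/
import Mathlib

section
/- Let ψ : ℝ^d → ℝ be a nonzero bounded continuous positive definite function with ψ ∈ C_0(ℝ^d), let Λ be the finite nonnegative Borel measure on ℝ^d with ψ(x) = ∫_{ℝ^d} e^{−i xᵀω} dΛ(ω) given by Bochner's theorem, and let k(x,y) = ψ(x − y). Then k is c0-universal if and only if supp(Λ) = ℝ^d. -/
open MeasureTheory Filter Topology RealInnerProductSpace
open scoped ZeroAtInfty

/-- The topological support of a nonnegative Borel measure: the set of points all of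
whose open neighbourhoods have positive measure. -/
def msupport {X : Type*} [TopologicalSpace X] [MeasurableSpace X]
    (μ : MeasureTheory.Measure X) : Set X :=
  {x | ∀ U : Set X, IsOpen U → x ∈ U → μ U ≠ 0}

/-!
Let `μ` be the image of `Λ` under `ω ↦ (2π)⁻¹ • ω`, so that `ψ = 𝓕 μ` with the kernel
`exp (-2πi⟪ω, x⟫)`, and let `w` be a Schwartz function. Integrating the kernel sections against
`𝓕 w` gives `∫ y, ψ (x - y) * 𝓕 w y = 𝓕 (w • μ) x`, so `𝓕 (w • μ)` is the kernel mean of `𝓕 w`.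

If `μ` has full support, it suffices that the functions `𝓕 (w • μ)` are dense in `C₀`. Averaging a
compactly supported `φ` against bump functions normalized in `L¹(μ)` yields densities `w` for which
`𝓕 (w • μ)` is bounded by `‖φ‖₁` and close to `𝓕 φ` on a given compact set. Since `ψ`, and hence
every `𝓕 (w • μ)`, vanishes at infinity, convex combinations of successively chosen approximants,
each good on the compact set where the earlier errors are concentrated, are uniformly close.

If `μ` vanishes on a nonempty open set, let `w ≠ 0` be supported there. The kernel mean of `𝓕 w` is
zero, so `𝓕 w` annihilates the reproducing kernel Hilbert space. Universality then forces
`∫ (𝓕 w) ^ 2 = 0` for the real and imaginary parts, so `w = 0`, a contradiction.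
-/

open scoped SchwartzMap FourierTransform

section ZeroAtInfty

variable {α F : Type*} [TopologicalSpace α] [NormedAddCommGroup F]

theorem norm_zeroAtInfty_le (f : C₀(α, F)) {C : ℝ} (hC : 0 ≤ C) : ‖f‖ ≤ C ↔ ∀ x, ‖f x‖ ≤ C :=
  BoundedContinuousFunction.norm_le (f := f.toBCF) hC

theorem norm_zeroAtInfty_apply_le (f : C₀(α, F)) (x : α) : ‖f x‖ ≤ ‖f‖ :=
  f.toBCF.norm_coe_le_norm x

theorem exists_isCompact_norm_add_le (f : C₀(α, F)) {ε : ℝ} (hε : 0 < ε) :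
    ∃ K : Set α, IsCompact K ∧
      ∀ h : C₀(α, F), (∀ x ∈ K, ‖h x‖ ≤ ε) → ‖f + h‖ ≤ max ‖f‖ ‖h‖ + ε := by
  have hsmall : ∀ᶠ x in cocompact α, ‖f x‖ < ε :=
    f.zero_at_infty'.norm.eventually_lt_const (by simpa using hε)
  obtain ⟨K, hK, hKε⟩ := mem_cocompact.1 hsmall
  refine ⟨K, hK, fun h hh => (norm_zeroAtInfty_le _ (by positivity)).2 fun x => ?_⟩
  grw [ZeroAtInftyContinuousMap.add_apply, norm_add_le]
  by_cases hx : x ∈ K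
  · exact add_le_add ((norm_zeroAtInfty_apply_le f x).trans (le_max_left _ _)) (hh x hx)
  · rw [add_comm]
    exact add_le_add ((norm_zeroAtInfty_apply_le h x).trans (le_max_right _ _)) (hKε hx).le

variable [NormedSpace ℝ F]

-- Average `n + 1` elements of `S` chosen one after the other, each close to `g` where the sum of
-- the previous errors is not small: the errors essentially do not add up.
theorem exists_mem_norm_smul_sub_le {S : Set C₀(α, F)} (hS : Convex ℝ S) {g : C₀(α, F)} {C : ℝ}
    (hSg : ∀ K : Set α, IsCompact K → ∀ ε > 0, ∃ f ∈ S, ‖f‖ ≤ C ∧ ∀ x ∈ K, ‖f x - g x‖ ≤ ε)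
    {ε : ℝ} (hε : 0 < ε) (n : ℕ) :
    ∃ f ∈ S, ‖(n + 1 : ℝ) • (f - g)‖ ≤ C + ‖g‖ + n * ε := by
  induction n with
  | zero =>
    obtain ⟨f, hfS, hfC, -⟩ := hSg ∅ isCompact_empty 1 one_pos
    refine ⟨f, hfS, ?_⟩
    simpa using (norm_sub_le f g).trans (by gcongr)
  | succ n ih =>
    obtain ⟨f, hfS, hf⟩ := ih
    obtain ⟨K, hK, hKadd⟩ := exists_isCompact_norm_add_le ((n + 1 : ℝ) • (f - g)) hε
    obtain ⟨f', hfS', hfC', hfK'⟩ := hSg K hK ε hε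
    refine ⟨((n + 1) / (n + 2) : ℝ) • f + (1 / (n + 2) : ℝ) • f',
      hS hfS hfS' (by positivity) (by positivity) (by field_simp; ring), ?_⟩
    have hsum : ((n + 1 : ℕ) + 1 : ℝ) •
        (((n + 1) / (n + 2) : ℝ) • f + (1 / (n + 2) : ℝ) • f' - g) =
          (n + 1 : ℝ) • (f - g) + (f' - g) := by
      push_cast
      match_scalars <;> field_simp <;> ring
    have hf'g : ‖f' - g‖ ≤ C + ‖g‖ + n * ε := by
      grw [norm_sub_le, hfC']
      exact le_add_of_nonneg_right (by positivity)
    grw [hsum, hKadd _ hfK', max_le hf hf'g]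
    push_cast
    linarith

theorem mem_closure_of_forall_isCompact {S : Set C₀(α, F)} (hS : Convex ℝ S) {g : C₀(α, F)}
    {C : ℝ} (hSg : ∀ K : Set α, IsCompact K → ∀ ε > 0,
      ∃ f ∈ S, ‖f‖ ≤ C ∧ ∀ x ∈ K, ‖f x - g x‖ ≤ ε) :
    g ∈ closure S := by
  refine Metric.mem_closure_iff.2 fun ε hε => ?_
  obtain ⟨n, hn⟩ := exists_nat_gt ((C + ‖g‖) / (ε / 2))
  obtain ⟨f, hfS, hf⟩ := exists_mem_norm_smul_sub_le hS hSg (half_pos hε) n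
  refine ⟨f, hfS, ?_⟩
  rw [div_lt_iff₀ (half_pos hε)] at hn
  rw [norm_smul, Real.norm_of_nonneg (by positivity)] at hf
  have hfε : ((n : ℝ) + 1) * ‖f - g‖ < (n + 1) * ε := by linarith
  rw [dist_eq_norm, norm_sub_rev]
  exact lt_of_mul_lt_mul_left hfε (by positivity)

end ZeroAtInfty

section SchwartzDense

variable {E F : Type*} [NormedAddCommGroup E] [InnerProductSpace ℝ E] [FiniteDimensional ℝ E]
  [NormedAddCommGroup F] [NormedSpace ℝ F]

theorem exists_contDiffBump_eq_one {K : Set E} (hK : IsCompact K) :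
    ∃ χ : ContDiffBump (0 : E), ∀ x ∈ K, χ x = 1 := by
  obtain ⟨r, hr, hKr⟩ := hK.isBounded.subset_closedBall_lt 0 0
  exact ⟨⟨r, r + 1, hr, by linarith⟩, fun x hx => ContDiffBump.one_of_mem_closedBall _ (hKr hx)⟩

theorem denseRange_toZeroAtInfty :
    DenseRange (SchwartzMap.toZeroAtInfty : 𝓢(E, F) → C₀(E, F)) := by
  intro g
  have hconvex : Convex ℝ (Set.range (SchwartzMap.toZeroAtInfty : 𝓢(E, F) → C₀(E, F))) :=
    (SchwartzMap.toZeroAtInftyCLM ℝ E F).range.convex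
  refine mem_closure_of_forall_isCompact hconvex (C := ‖g‖ + 1) fun K hK ε hε => ?_
  obtain ⟨g', hg'smooth, hg', -⟩ := (map_continuous g).exists_contDiff_approx ⊤
    (ε := fun _ => min ε 1) (by fun_prop) fun _ => by positivity
  obtain ⟨χ, hχ⟩ := exists_contDiffBump_eq_one hK
  let f : 𝓢(E, F) := (χ.hasCompactSupport.smul_right (f' := g')).toSchwartzMap
    (χ.contDiff.smul hg'smooth)
  have hf : ∀ x, f x = χ x • g' x := fun _ => rfl
  refine ⟨f.toZeroAtInfty, ⟨f, rfl⟩, (norm_zeroAtInfty_le _ (by positivity)).2 fun x => ?_,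
    fun x hx => ?_⟩
  · have hg'x : ‖g' x‖ ≤ ‖g‖ + 1 := by
      grw [norm_le_norm_add_norm_sub' (g' x) (g x), norm_zeroAtInfty_apply_le, ← dist_eq_norm,
        hg' x, min_le_right]
    grw [SchwartzMap.toZeroAtInfty_apply, hf, norm_smul, Real.norm_of_nonneg χ.nonneg, χ.le_one,
      one_mul, hg'x]
  · rw [SchwartzMap.toZeroAtInfty_apply, hf, hχ x hx, one_smul, ← dist_eq_norm]
    exact (hg' x).le.trans (min_le_left _ _)

end SchwartzDense

/-- The Fourier transform of the vector measure `g • μ`. -/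
local notation "𝓕[" μ "]" => VectorFourier.fourierIntegral Real.fourierChar μ (innerₗ _)

section FourierIntegral

theorem norm_fourierChar_sub_le (s t : ℝ) :
    ‖(Real.fourierChar s : ℂ) - Real.fourierChar t‖ ≤ 2 * Real.pi * |s - t| := by
  have hfactor : (Real.fourierChar s : ℂ) - Real.fourierChar t =
      Real.fourierChar t * (Complex.exp (Complex.I * (2 * Real.pi * (s - t) : ℝ)) - 1) := by
    rw [mul_sub, mul_one, Real.fourierChar_apply, Real.fourierChar_apply, ← Complex.exp_add]
    congr 2
    push_cast
    ring
  grw [hfactor, norm_mul, Circle.norm_coe, one_mul, Real.norm_exp_I_mul_ofReal_sub_one_le]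
  simp [abs_of_pos Real.pi_pos]

variable {E F : Type*} [NormedAddCommGroup E] [InnerProductSpace ℝ E] [MeasurableSpace E]
  [BorelSpace E] [NormedAddCommGroup F] [NormedSpace ℂ F] {μ : Measure E}

theorem continuous_fourierIntegral {g : E → F} (hg : Integrable g μ) : Continuous (𝓕[μ] g) :=
  VectorFourier.fourierIntegral_continuous Real.continuous_fourierChar continuous_inner hg

theorem continuous_of_fourierIntegral_one_eq [IsFiniteMeasure μ] {ψ : E → ℝ}
    (hψ : ∀ x, 𝓕[μ] (1 : E → ℂ) x = ψ x) : Continuous ψ := by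
  have hcont : Continuous fun x => (𝓕[μ] (1 : E → ℂ) x).re :=
    Complex.continuous_re.comp (continuous_fourierIntegral (integrable_const 1))
  simpa only [hψ, Complex.ofReal_re] using hcont

theorem fourierIntegral_one_map_smul (Λ : Measure E) (x : E) :
    𝓕[Λ.map fun ω => (2 * Real.pi)⁻¹ • ω] (1 : E → ℂ) x =
      ∫ ω, Complex.exp (-(Complex.I * (⟪x, ω⟫ : ℝ))) ∂Λ := by
  have := Real.continuous_fourierChar
  rw [VectorFourier.fourierIntegral, integral_map (by fun_prop)]
  · refine integral_congr_ae (.of_forall fun ω => ?_)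
    simp only [Pi.one_apply, Circle.smul_def, smul_eq_mul, mul_one, Real.fourierChar_apply,
      innerₗ_apply_apply, real_inner_comm x, real_inner_smul_right]
    congr 1
    push_cast
    field_simp
  · simp only [innerₗ_apply_apply]
    exact Continuous.aestronglyMeasurable (by fun_prop)

theorem norm_fourierIntegral_sub_le {g : E → F} (hg : Integrable g μ) {t : E} {δ : ℝ}
    (hgt : Function.support g ⊆ Metric.closedBall t δ) (x : E) :
    ‖𝓕[μ] g x - Real.fourierChar (-⟪t, x⟫) • ∫ ω, g ω ∂μ‖ ≤
      2 * Real.pi * (δ * ‖x‖) * ∫ ω, ‖g ω‖ ∂μ := by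
  have hint : Integrable (fun ω => Real.fourierChar (-⟪ω, x⟫) • g ω) μ :=
    (Real.fourierIntegral_convergent_iff x).2 hg
  have hconst : Integrable (fun ω => Real.fourierChar (-⟪t, x⟫) • g ω) μ :=
    hg.smul (Real.fourierChar (-⟪t, x⟫) : ℂ)
  have hdiff : 𝓕[μ] g x - Real.fourierChar (-⟪t, x⟫) • ∫ ω, g ω ∂μ =
      ∫ ω, ((Real.fourierChar (-⟪ω, x⟫) : ℂ) - Real.fourierChar (-⟪t, x⟫)) • g ω ∂μ := by
    simp only [sub_smul, ← Circle.smul_def]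
    rw [integral_sub hint hconst]
    simp only [Circle.smul_def, integral_smul]
    rfl
  rw [hdiff, ← integral_const_mul]
  refine norm_integral_le_of_norm_le (hg.norm.const_mul _) (.of_forall fun ω => ?_)
  by_cases hω : g ω = 0
  · simp [hω]
  · have hωt : |-⟪ω, x⟫ - -⟪t, x⟫| ≤ δ * ‖x‖ := by
      rw [neg_sub_neg, ← inner_sub_left]
      grw [abs_real_inner_le_norm, ← dist_eq_norm, dist_comm, Metric.mem_closedBall.1 (hgt hω)]
    grw [norm_smul, norm_fourierChar_sub_le, hωt]

end FourierIntegral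

section RecenteredBump

variable {E : Type*} [NormedAddCommGroup E] [InnerProductSpace ℝ E] [FiniteDimensional ℝ E]

/-- The bump function `b` moved to the center `t`. -/
def recenteredBump (b : ContDiffBump (0 : E)) (t : E) : ContDiffBump t where
  rIn := b.rIn
  rOut := b.rOut
  rIn_pos := b.rIn_pos
  rIn_lt_rOut := b.rIn_lt_rOut

theorem recenteredBump_apply (b : ContDiffBump (0 : E)) (t ω : E) :
    recenteredBump b t ω = b (ω - t) := by
  simp [ContDiffBump.apply, recenteredBump]

end RecenteredBump

section LocalAverage

variable {E F : Type*} [NormedAddCommGroup E] [InnerProductSpace ℝ E] [FiniteDimensional ℝ E]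
  [MeasurableSpace E] [BorelSpace E] [NormedAddCommGroup F] [NormedSpace ℂ F]
  {μ : Measure E} {b : ContDiffBump (0 : E)} {φ : E → F}

/-- The average of the values of `φ` near a point, weighted by translates of the bump function `b`
that are normalized in `L¹(μ)`. As `b` shrinks, the measures `localAverage b μ φ • μ` approach
`φ • volume`, provided that `μ` has full support. -/
noncomputable def localAverage (b : ContDiffBump (0 : E)) (μ : Measure E) (φ : E → F) (ω : E) : F :=
  ∫ t, (recenteredBump b t).normed μ ω • φ t

theorem localAverage_eq_convolution (b : ContDiffBump (0 : E)) (μ : Measure E) (φ : E → F) :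
    localAverage b μ φ = convolution (fun t => (∫ ω, recenteredBump b t ω ∂μ)⁻¹ • φ t) b
      (ContinuousLinearMap.lsmul ℝ ℝ).flip volume := by
  ext ω
  simp only [localAverage, convolution, ContinuousLinearMap.flip_apply,
    ContinuousLinearMap.lsmul_apply, ContDiffBump.normed_def, recenteredBump_apply,
    div_eq_mul_inv, mul_smul]

theorem hasCompactSupport_localAverage (hφ : HasCompactSupport φ) :
    HasCompactSupport (localAverage b μ φ) := by
  rw [localAverage_eq_convolution]
  exact hφ.smul_left.convolution _ b.hasCompactSupport

variable [IsFiniteMeasure μ]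

theorem continuous_integral_recenteredBump :
    Continuous fun t => ∫ ω, recenteredBump b t ω ∂μ := by
  simp only [recenteredBump_apply]
  refine continuous_of_dominated (bound := fun _ => 1)
    (fun t => (b.continuous.comp (by fun_prop)).aestronglyMeasurable)
    (fun t => .of_forall fun ω => ?_) (integrable_const 1) (.of_forall fun ω => ?_)
  · rw [Real.norm_of_nonneg b.nonneg]
    exact b.le_one
  · exact b.continuous.comp (by fun_prop)

variable [μ.IsOpenPosMeasure]

theorem continuous_inv_integral_recenteredBump_smul (hφ : Continuous φ) :
    Continuous fun t => (∫ ω, recenteredBump b t ω ∂μ)⁻¹ • φ t :=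
  (continuous_integral_recenteredBump.inv₀ fun t =>
    (recenteredBump b t).integral_pos.ne').smul hφ

theorem contDiff_localAverage {n : ℕ∞} (hφ : Continuous φ) : ContDiff ℝ n (localAverage b μ φ) := by
  rw [localAverage_eq_convolution]
  exact b.hasCompactSupport.contDiff_convolution_right _
    (continuous_inv_integral_recenteredBump_smul hφ).locallyIntegrable b.contDiff

theorem continuous_normed_recenteredBump :
    Continuous fun p : E × E => (recenteredBump b p.2).normed μ p.1 := by
  have hnum : Continuous fun p : E × E => recenteredBump b p.2 p.1 := by
    simp only [recenteredBump_apply]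
    exact b.continuous.comp (by fun_prop)
  exact hnum.div (continuous_integral_recenteredBump.comp continuous_snd)
    fun p => (recenteredBump b p.2).integral_pos.ne'

theorem integrable_prod_fourierChar_smul_normed_smul (hφ : Continuous φ) (hφc : HasCompactSupport φ)
    (x : E) :
    Integrable (fun p : E × E =>
      Real.fourierChar (-⟪p.1, x⟫) • (recenteredBump b p.2).normed μ p.1 • φ p.2)
      (μ.prod volume) := by
  have hbase : Integrable fun t => (∫ ω, recenteredBump b t ω ∂μ)⁻¹ • φ t :=
    (continuous_inv_integral_recenteredBump_smul hφ).integrable_of_hasCompactSupport hφc.smul_left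
  refine (hbase.comp_snd μ).mono ?_ (.of_forall fun p => ?_)
  · have := Real.continuous_fourierChar
    have hweight := continuous_normed_recenteredBump (μ := μ) (b := b)
    exact Continuous.aestronglyMeasurable (by fun_prop)
  · grw [Circle.norm_smul, ContDiffBump.normed_def, div_eq_mul_inv, mul_smul, norm_smul,
      Real.norm_of_nonneg (ContDiffBump.nonneg _), ContDiffBump.le_one, one_mul]

theorem fourierIntegral_localAverage (hφ : Continuous φ) (hφc : HasCompactSupport φ) (x : E) :
    𝓕[μ] (localAverage b μ φ) x =
      ∫ t, 𝓕[μ] (fun ω => (recenteredBump b t).normed μ ω • φ t) x := by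
  simp only [VectorFourier.fourierIntegral, localAverage, innerₗ_apply_apply,
    ← integral_smul, Circle.smul_def]
  exact integral_integral_swap (integrable_prod_fourierChar_smul_normed_smul hφ hφc x)

theorem norm_fourierIntegral_normed_smul_le (t x : E) (v : F) :
    ‖𝓕[μ] (fun ω => (recenteredBump b t).normed μ ω • v) x‖ ≤ ‖v‖ := by
  grw [VectorFourier.norm_fourierIntegral_le_integral_norm]
  simp only [norm_smul, Real.norm_of_nonneg (ContDiffBump.nonneg_normed _ _)]
  rw [integral_mul_const, ContDiffBump.integral_normed, one_mul]

theorem norm_fourierIntegral_normed_smul_sub_le [CompleteSpace F] (t x : E) (v : F) :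
    ‖𝓕[μ] (fun ω => (recenteredBump b t).normed μ ω • v) x - Real.fourierChar (-⟪t, x⟫) • v‖ ≤
      2 * Real.pi * (b.rOut * ‖x‖) * ‖v‖ := by
  let w := (recenteredBump b t).normed μ
  have hmass : ∫ ω, w ω • v ∂μ = v := (recenteredBump b t).integral_normed_smul v (μ := μ)
  have hsupp : Function.support (fun ω => w ω • v) ⊆ Metric.closedBall t b.rOut := fun ω hω =>
    Metric.ball_subset_closedBall <|
      (recenteredBump b t).support_normed_eq (μ := μ).subset (left_ne_zero_of_smul hω)
  have hbound :=
    norm_fourierIntegral_sub_le ((recenteredBump b t).integrable_normed.smul_const v) hsupp x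
  simpa only [hmass, norm_smul, w, Real.norm_of_nonneg (ContDiffBump.nonneg_normed _ _),
    integral_mul_const, ContDiffBump.integral_normed, one_mul] using hbound

theorem norm_fourierIntegral_localAverage_le (hφ : Continuous φ) (hφc : HasCompactSupport φ)
    (x : E) : ‖𝓕[μ] (localAverage b μ φ) x‖ ≤ ∫ t, ‖φ t‖ := by
  rw [fourierIntegral_localAverage hφ hφc]
  exact norm_integral_le_of_norm_le (hφ.integrable_of_hasCompactSupport hφc).norm
    (.of_forall fun t => norm_fourierIntegral_normed_smul_le t x (φ t))

theorem norm_fourierIntegral_localAverage_sub_le [CompleteSpace F] (hφ : Continuous φ)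
    (hφc : HasCompactSupport φ) (x : E) :
    ‖𝓕[μ] (localAverage b μ φ) x - 𝓕 φ x‖ ≤ 2 * Real.pi * (b.rOut * ‖x‖) * ∫ t, ‖φ t‖ := by
  have hφint : Integrable φ := hφ.integrable_of_hasCompactSupport hφc
  rw [fourierIntegral_localAverage hφ hφc, Real.fourier_eq, ← integral_sub, ← integral_const_mul]
  · exact norm_integral_le_of_norm_le (hφint.norm.const_mul _)
      (.of_forall fun t => norm_fourierIntegral_normed_smul_sub_le t x (φ t))
  · exact (integrable_prod_fourierChar_smul_normed_smul hφ hφc x).integral_prod_right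
  · exact (Real.fourierIntegral_convergent_iff x).2 hφint

theorem exists_schwartz_fourierIntegral_approx_of_hasCompactSupport [CompleteSpace F]
    (μ : Measure E) [IsFiniteMeasure μ] [μ.IsOpenPosMeasure] (hφ : Continuous φ)
    (hφc : HasCompactSupport φ) (r : ℝ) {ε : ℝ} (hε : 0 < ε) :
    ∃ w : 𝓢(E, F), (∀ x, ‖𝓕[μ] w x‖ ≤ ∫ t, ‖φ t‖) ∧
      ∀ x, ‖x‖ ≤ r → ‖𝓕[μ] w x - 𝓕 φ x‖ ≤ ε := by
  obtain ⟨δ, hδ, hδε⟩ := exists_pos_mul_lt hε (2 * Real.pi * r * ∫ t, ‖φ t‖)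
  let b : ContDiffBump (0 : E) := ⟨δ / 2, δ, half_pos hδ, half_lt_self hδ⟩
  refine ⟨(hasCompactSupport_localAverage (μ := μ) (b := b) hφc).toSchwartzMap
    (contDiff_localAverage hφ), norm_fourierIntegral_localAverage_le hφ hφc, fun x hx => ?_⟩
  calc ‖𝓕[μ] (localAverage b μ φ) x - 𝓕 φ x‖
      ≤ 2 * Real.pi * (δ * ‖x‖) * ∫ t, ‖φ t‖ := norm_fourierIntegral_localAverage_sub_le hφ hφc x
    _ ≤ 2 * Real.pi * (δ * r) * ∫ t, ‖φ t‖ := by gcongr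
    _ ≤ ε := by linarith

theorem exists_schwartz_fourierIntegral_approx [CompleteSpace F] (μ : Measure E) [IsFiniteMeasure μ]
    [μ.IsOpenPosMeasure] {u : E → F} (hu : Integrable u) (r : ℝ) {ε : ℝ} (hε : 0 < ε) :
    ∃ w : 𝓢(E, F), (∀ x, ‖𝓕[μ] w x‖ ≤ (∫ t, ‖u t‖) + ε) ∧
      ∀ x, ‖x‖ ≤ r → ‖𝓕[μ] w x - 𝓕 u x‖ ≤ ε := by
  obtain ⟨φ, hφc, hφu, hφ, hφint⟩ := hu.exists_hasCompactSupport_integral_sub_le (half_pos hε)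
  have hdist : ∫ t, ‖φ t - u t‖ ≤ ε / 2 := by simpa only [norm_sub_rev] using hφu
  have hφnorm : ∫ t, ‖φ t‖ ≤ (∫ t, ‖u t‖) + ε / 2 := by
    have hdiff : ∫ t, (‖φ t‖ - ‖u t‖) ≤ ∫ t, ‖φ t - u t‖ :=
      integral_mono (hφint.norm.sub hu.norm) (hφint.sub hu).norm
        fun t => norm_sub_norm_le (φ t) (u t)
    rw [integral_sub hφint.norm hu.norm] at hdiff
    linarith
  have hfourier (x : E) : ‖𝓕 φ x - 𝓕 u x‖ ≤ ε / 2 := by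
    have hsub : 𝓕 φ x - 𝓕 u x = 𝓕 (fun t => φ t - u t) x := by
      simp only [Real.fourier_eq, smul_sub]
      exact (integral_sub ((Real.fourierIntegral_convergent_iff x).2 hφint)
        ((Real.fourierIntegral_convergent_iff x).2 hu)).symm
    rw [hsub]
    exact (VectorFourier.norm_fourierIntegral_le_integral_norm ..).trans hdist
  obtain ⟨w, hwbdd, hw⟩ :=
    exists_schwartz_fourierIntegral_approx_of_hasCompactSupport μ hφ hφc r (half_pos hε)
  refine ⟨w, fun x => (hwbdd x).trans (by linarith), fun x hx => ?_⟩
  exact (norm_sub_le_norm_sub_add_norm_sub _ (𝓕 φ x) _).trans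
    (by linarith [hw x hx, hfourier x])

end LocalAverage

section Density

variable {E F : Type*} [NormedAddCommGroup E] [InnerProductSpace ℝ E] [FiniteDimensional ℝ E]
  [MeasurableSpace E] [BorelSpace E] [NormedAddCommGroup F] [NormedSpace ℂ F]
  {μ : Measure E} [IsFiniteMeasure μ]

theorem integral_fourierIntegral_one_sub_smul [CompleteSpace F] {h : E → F} (hh : Integrable h)
    (x : E) :
    ∫ y, 𝓕[μ] (1 : E → ℂ) (x - y) • h y = 𝓕[μ] (𝓕⁻ h) x := by
  let character : E → ℂ := fun ω => Real.fourierChar (-⟪ω, x⟫)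
  have hchar : Integrable character μ := by
    refine .of_bound (Continuous.aestronglyMeasurable ?_) 1
      (.of_forall fun ω => (Circle.norm_coe _).le)
    have := Real.continuous_fourierChar
    fun_prop
  have hshift (y : E) : 𝓕[μ] (1 : E → ℂ) (x - y) = 𝓕[μ] character (-y) := by
    refine integral_congr_ae (.of_forall fun ω => ?_)
    simp only [character, innerₗ_apply_apply, Circle.smul_def, Pi.one_apply, smul_eq_mul, mul_one,
      ← Circle.coe_mul, ← AddChar.map_add_eq_mul, inner_sub_right, inner_neg_right]
    ring_nf
  calc ∫ y, 𝓕[μ] (1 : E → ℂ) (x - y) • h y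
      = ∫ y, 𝓕[μ] character (-y) • h y := by simp only [hshift]
    _ = ∫ y, 𝓕[μ] character y • h (-y) := by
      rw [← integral_neg_eq_self]
      simp only [neg_neg]
    _ = ∫ ω, character ω • 𝓕 (fun y => h (-y)) ω ∂μ := by
      have hflip := VectorFourier.integral_fourierIntegral_smul_eq_flip (L := innerₗ E)
        Real.continuous_fourierChar continuous_inner hchar hh.comp_neg
      rwa [flip_innerₗ] at hflip
    _ = 𝓕[μ] (𝓕⁻ h) x := by rw [Real.fourierInv_eq_fourier_comp_neg]; rfl

theorem tendsto_integral_sub_smul {κ : E → ℂ} (hκ : Continuous κ)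
    (hκ0 : Tendsto κ (cocompact E) (𝓝 0)) {h : E → F} (hh : Integrable h) :
    Tendsto (fun x => ∫ y, κ (x - y) • h y) (cocompact E) (𝓝 0) := by
  have : (cocompact E).IsCountablyGenerated := by
    rw [← Metric.cobounded_eq_cocompact, ← comap_norm_atTop]
    infer_instance
  let κ₀ : C₀(E, ℂ) := ⟨⟨κ, hκ⟩, hκ0⟩
  rw [← integral_zero E F]
  refine tendsto_integral_filter_of_dominated_convergence (fun y => ‖κ₀‖ * ‖h y‖)
    (.of_forall fun x => ?_) (.of_forall fun x => .of_forall fun y => ?_)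
    (hh.norm.const_mul _) (.of_forall fun y => ?_)
  · exact (hκ.comp (by fun_prop)).aestronglyMeasurable.smul hh.1
  · grw [norm_smul, ← norm_zeroAtInfty_apply_le κ₀ (x - y)]
    rfl
  · have hsub : Tendsto (fun x => x - y) (cocompact E) (cocompact E) :=
      (Homeomorph.subRight y).isClosedEmbedding.tendsto_cocompact
    simpa using (hκ0.comp hsub).smul_const (h y)

theorem tendsto_fourierIntegral_schwartz [CompleteSpace F]
    (hμ : Tendsto (𝓕[μ] (1 : E → ℂ)) (cocompact E) (𝓝 0)) (w : 𝓢(E, F)) :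
    Tendsto (𝓕[μ] w) (cocompact E) (𝓝 0) := by
  have hconv : 𝓕[μ] w = fun x => ∫ y, 𝓕[μ] (1 : E → ℂ) (x - y) • (𝓕 w) y := by
    ext x
    rw [integral_fourierIntegral_one_sub_smul (𝓕 w).integrable, ← SchwartzMap.fourierInv_coe,
      FourierTransform.fourierInv_fourier_eq]
  rw [hconv]
  exact tendsto_integral_sub_smul (continuous_fourierIntegral (integrable_const 1)) hμ
    (𝓕 w).integrable

theorem convex_setOf_eq_fourierIntegral_schwartz :
    Convex ℝ {f : C₀(E, F) | ∃ w : 𝓢(E, F), ⇑f = 𝓕[μ] w} := by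
  rintro f ⟨w, hw⟩ f' ⟨w', hw'⟩ a b - - -
  refine ⟨a • w + b • w', ?_⟩
  have hcomb : ⇑(a • w + b • w') = (a : ℂ) • ⇑w + (b : ℂ) • ⇑w' := by
    ext x
    simp
  rw [hcomb, VectorFourier.fourierIntegral_add Real.continuous_fourierChar continuous_inner
    (w.integrable.smul _) (w'.integrable.smul _), VectorFourier.fourierIntegral_const_smul,
    VectorFourier.fourierIntegral_const_smul, ← hw, ← hw']
  ext x
  simp

theorem exists_schwartz_norm_fourierIntegral_sub_le [CompleteSpace F] [μ.IsOpenPosMeasure]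
    (hμ : Tendsto (𝓕[μ] (1 : E → ℂ)) (cocompact E) (𝓝 0)) (g : C₀(E, F)) {ε : ℝ} (hε : 0 < ε) :
    ∃ w : 𝓢(E, F), ∀ x, ‖𝓕[μ] w x - g x‖ ≤ ε := by
  let S : Set C₀(E, F) := {f | ∃ w : 𝓢(E, F), ⇑f = 𝓕[μ] w}
  have hschwartz : Set.range (SchwartzMap.toZeroAtInfty : 𝓢(E, F) → C₀(E, F)) ⊆
      closure S := by
    rintro _ ⟨f, rfl⟩
    refine mem_closure_of_forall_isCompact convex_setOf_eq_fourierIntegral_schwartz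
      (C := (∫ t, ‖(𝓕⁻ f) t‖) + 1) fun K hK ε hε => ?_
    obtain ⟨r, hr⟩ := hK.isBounded.exists_norm_le
    obtain ⟨w, hwbdd, hw⟩ :=
      exists_schwartz_fourierIntegral_approx μ (𝓕⁻ f).integrable r (lt_min one_pos hε)
    let fw : C₀(E, F) := ⟨⟨𝓕[μ] w, continuous_fourierIntegral w.integrable⟩,
      tendsto_fourierIntegral_schwartz hμ w⟩
    refine ⟨fw, ⟨w, rfl⟩, (norm_zeroAtInfty_le _ (by positivity)).2 fun x => ?_, fun x hx => ?_⟩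
    · exact (hwbdd x).trans (by gcongr; exact min_le_left _ _)
    · have hwf := hw x (hr x hx)
      rw [← SchwartzMap.fourier_coe, FourierTransform.fourier_fourierInv_eq] at hwf
      exact hwf.trans (min_le_right _ _)
  have hg : g ∈ closure S := closure_minimal hschwartz isClosed_closure
    (denseRange_toZeroAtInfty g)
  obtain ⟨f, ⟨w, hw⟩, hfg⟩ := Metric.mem_closure_iff.1 hg ε hε
  refine ⟨w, fun x => ?_⟩
  rw [← hw, norm_sub_rev]
  rw [dist_eq_norm] at hfg
  exact (norm_zeroAtInfty_apply_le (g - f) x).trans hfg.le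

end Density

/-- `c₀`-universality of the kernel `(x, y) ↦ ⟪Φ x, Φ y⟫` with feature map `Φ`, whose reproducing
kernel Hilbert space consists of the functions `⟪f, Φ ·⟫`: these are uniformly dense in `C₀`. -/
def IsC0Universal {X H : Type*} [TopologicalSpace X] [NormedAddCommGroup H]
    [InnerProductSpace ℝ H] (Φ : X → H) : Prop :=
  ∀ g : C₀(X, ℝ), ∀ ε > 0, ∃ f : H, ∀ x, |⟪f, Φ x⟫ - g x| ≤ ε

section KernelMean

open UniformSpace (Completion)

variable {X H : Type*} [MeasurableSpace X] [NormedAddCommGroup H] [InnerProductSpace ℝ H]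
  {ν : Measure X} {Φ : X → H} {q : X → ℝ}

theorem inner_integral_smul_coe (hqΦ : Integrable (fun y => q y • (Φ y : Completion H)) ν) (f : H) :
    ⟪(f : Completion H), ∫ y, q y • (Φ y : Completion H) ∂ν⟫ = ∫ y, q y * ⟪f, Φ y⟫ ∂ν := by
  simp only [← integral_inner hqΦ, real_inner_smul_right, Completion.inner_coe]

theorem exists_forall_abs_inner_sub_integral_le
    (hqΦ : Integrable (fun y => q y • (Φ y : Completion H)) ν) {C : ℝ} (hΦ : ∀ x, ‖Φ x‖ ≤ C)
    {ε : ℝ} (hε : 0 < ε) :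
    ∃ f : H, ∀ x, |⟪f, Φ x⟫ - ∫ y, q y * ⟪Φ x, Φ y⟫ ∂ν| ≤ ε := by
  let v : Completion H := ∫ y, q y • (Φ y : Completion H) ∂ν
  obtain ⟨δ, hδ, hδε⟩ := exists_pos_mul_lt hε C
  obtain ⟨f, hf⟩ := Completion.denseRange_coe.exists_dist_lt v hδ
  refine ⟨f, fun x => ?_⟩
  have hinner : ⟪f, Φ x⟫ - ∫ y, q y * ⟪Φ x, Φ y⟫ ∂ν = ⟪(f : Completion H) - v, Φ x⟫ := by
    rw [← inner_integral_smul_coe hqΦ, real_inner_comm v, inner_sub_left, Completion.inner_coe]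
  calc |⟪f, Φ x⟫ - ∫ y, q y * ⟪Φ x, Φ y⟫ ∂ν|
      ≤ ‖(f : Completion H) - v‖ * ‖(Φ x : Completion H)‖ := hinner ▸ abs_real_inner_le_norm _ _
    _ ≤ δ * C := by
      gcongr
      · rw [norm_sub_rev, ← dist_eq_norm]
        exact hf.le
      · rw [Completion.norm_coe]
        exact hΦ x
    _ ≤ ε := by linarith

-- The kernel mean `v = ∫ q • Φ` satisfies `⟪v, v⟫ = ∫ q * ⟪v, Φ⟫ = 0`.
theorem integral_mul_inner_eq_zero (hqΦ : Integrable (fun y => q y • (Φ y : Completion H)) ν)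
    (hq : ∀ x, ∫ y, q y * ⟪Φ x, Φ y⟫ ∂ν = 0) (f : H) : ∫ y, q y * ⟪f, Φ y⟫ ∂ν = 0 := by
  let v : Completion H := ∫ y, q y • (Φ y : Completion H) ∂ν
  have horth (x : X) : ⟪v, Φ x⟫ = 0 := by
    rw [real_inner_comm, inner_integral_smul_coe hqΦ, hq]
  have hself : ⟪v, v⟫ = 0 := by
    rw [← integral_inner hqΦ]
    simp only [real_inner_smul_right, horth, mul_zero, integral_zero]
  have hv : v = 0 := inner_self_eq_zero.1 hself
  rw [← inner_integral_smul_coe hqΦ]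
  exact (congrArg _ hv).trans (inner_zero_right _)

theorem integrable_mul_inner (hqΦ : Integrable (fun y => q y • (Φ y : Completion H)) ν) (f : H) :
    Integrable (fun y => q y * ⟪f, Φ y⟫) ν := by
  simpa only [real_inner_smul_right, Completion.inner_coe] using
    hqΦ.const_inner (𝕜 := ℝ) (f : Completion H)

theorem IsC0Universal.eq_zero_of_integral_mul_inner_eq_zero [TopologicalSpace X]
    [OpensMeasurableSpace X] [ν.IsOpenPosMeasure] (huniv : IsC0Universal Φ) {q : C₀(X, ℝ)}
    (hqint : Integrable q ν) (hqΦ : Integrable (fun y => q y • (Φ y : Completion H)) ν)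
    (hq : ∀ x, ∫ y, q y * ⟪Φ x, Φ y⟫ ∂ν = 0) : q = 0 := by
  have hsqint : Integrable (fun y => q y * q y) ν :=
    hqint.mul_bdd (map_continuous q).aestronglyMeasurable (.of_forall (norm_zeroAtInfty_apply_le q))
  have hsq : ∫ y, q y * q y ∂ν = 0 := by
    refine abs_nonpos_iff.1 (le_of_forall_pos_le_add fun η hη => ?_)
    obtain ⟨ε, hε, hεη⟩ := exists_pos_mul_lt hη (∫ y, ‖q y‖ ∂ν)
    obtain ⟨f, hf⟩ := huniv q ε hε
    calc |∫ y, q y * q y ∂ν|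
        = ‖∫ y, q y * (⟪f, Φ y⟫ - q y) ∂ν‖ := by
          simp only [mul_sub]
          rw [integral_sub (integrable_mul_inner hqΦ f) hsqint, integral_mul_inner_eq_zero hqΦ hq,
            zero_sub, norm_neg, Real.norm_eq_abs]
      _ ≤ ∫ y, ‖q y‖ * ε ∂ν :=
          norm_integral_le_of_norm_le (hqint.norm.mul_const ε) (.of_forall fun y => by
            grw [norm_mul, Real.norm_eq_abs (_ - _), hf y])
      _ ≤ 0 + η := by
          rw [integral_mul_const, zero_add]
          exact hεη.le
  have hae : (fun y => q y * q y) =ᵐ[ν] 0 :=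
    (integral_eq_zero_iff_of_nonneg (fun y => mul_self_nonneg (q y)) hsqint).1 hsq
  have hsq0 : (fun y => q y * q y) = 0 :=
    (Continuous.ae_eq_iff_eq ν (by fun_prop) continuous_zero).1 hae
  ext y
  exact mul_self_eq_zero.1 (congrFun hsq0 y)

end KernelMean

section TranslationInvariant

variable {E H : Type*} [NormedAddCommGroup E] [NormedAddCommGroup H]
  [InnerProductSpace ℝ H] {ψ : E → ℝ} {Φ : E → H}

theorem norm_sub_sq_of_inner_eq_sub (hΦ : ∀ x y, ⟪Φ x, Φ y⟫ = ψ (x - y)) (x y : E) :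
    ‖Φ x - Φ y‖ ^ 2 = 2 * (ψ 0 - ψ (x - y)) := by
  rw [norm_sub_sq_real, ← real_inner_self_eq_norm_sq, ← real_inner_self_eq_norm_sq, hΦ, hΦ, hΦ,
    sub_self, sub_self]
  ring

theorem continuous_of_inner_eq_sub (hψ : Continuous ψ) (hΦ : ∀ x y, ⟪Φ x, Φ y⟫ = ψ (x - y)) :
    Continuous Φ := by
  refine continuous_iff_continuousAt.2 fun x => ?_
  have hsq : Tendsto (fun y => ‖Φ y - Φ x‖ ^ 2) (𝓝 x) (𝓝 0) := by
    simp only [norm_sub_sq_of_inner_eq_sub hΦ]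
    have hcont : Continuous fun y => 2 * (ψ 0 - ψ (y - x)) := by fun_prop
    simpa using hcont.tendsto x
  refine tendsto_iff_norm_sub_tendsto_zero.2 ?_
  simpa [Real.sqrt_sq] using hsq.sqrt

theorem norm_of_inner_eq_sub (hΦ : ∀ x y, ⟪Φ x, Φ y⟫ = ψ (x - y)) (x : E) : ‖Φ x‖ = √(ψ 0) := by
  rw [norm_eq_sqrt_real_inner, hΦ, sub_self]

theorem integrable_smul_of_inner_eq_sub [SecondCountableTopology E] [MeasurableSpace E]
    [BorelSpace E] {ν : Measure E} (hψ : Continuous ψ) (hΦ : ∀ x y, ⟪Φ x, Φ y⟫ = ψ (x - y))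
    {q : E → ℝ} (hq : Integrable q ν) :
    Integrable (fun y => q y • (Φ y : UniformSpace.Completion H)) ν := by
  have hcont : Continuous fun y => (Φ y : UniformSpace.Completion H) :=
    (UniformSpace.Completion.continuous_coe H).comp (continuous_of_inner_eq_sub hψ hΦ)
  refine hq.smul_bdd (√(ψ 0)) hcont.aestronglyMeasurable (.of_forall fun y => ?_)
  rw [UniformSpace.Completion.norm_coe, norm_of_inner_eq_sub hΦ]

end TranslationInvariant

theorem msupport_eq_univ_iff {X : Type*} [TopologicalSpace X] [MeasurableSpace X] {μ : Measure X} :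
    msupport μ = Set.univ ↔ μ.IsOpenPosMeasure :=
  ⟨fun h => ⟨fun U hU ⟨x, hx⟩ => (h ▸ Set.mem_univ x : x ∈ msupport μ) U hU hx⟩,
    fun _ => Set.eq_univ_of_forall fun _ _ hU hx => hU.measure_ne_zero μ ⟨_, hx⟩⟩

theorem isOpenPosMeasure_map_iff {X Y : Type*} [TopologicalSpace X] [MeasurableSpace X]
    [BorelSpace X] [TopologicalSpace Y] [MeasurableSpace Y] [BorelSpace Y] {μ : Measure X}
    (e : X ≃ₜ Y) : (μ.map e).IsOpenPosMeasure ↔ μ.IsOpenPosMeasure := by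
  refine ⟨fun _ => ?_, fun _ => e.continuous.isOpenPosMeasure_map e.surjective⟩
  have := e.symm.continuous.isOpenPosMeasure_map e.symm.surjective (μ := μ.map e)
  rwa [Measure.map_map e.symm.measurable e.measurable, e.symm_comp_self, Measure.map_id] at this

section Bochner

variable {E H : Type*} [NormedAddCommGroup E] [InnerProductSpace ℝ E] [FiniteDimensional ℝ E]
  [MeasurableSpace E] [BorelSpace E] [NormedAddCommGroup H] [InnerProductSpace ℝ H]
  {μ Λ : Measure E} [IsFiniteMeasure μ] [IsFiniteMeasure Λ] {ψ : E → ℝ} {Φ : E → H}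

theorem integral_fourier_mul_inner (hψ : ∀ x, 𝓕[μ] (1 : E → ℂ) x = ψ x)
    (hΦ : ∀ x y, ⟪Φ x, Φ y⟫ = ψ (x - y)) (ℓ : ℂ →L[ℝ] ℝ) (w : 𝓢(E, ℂ)) (x : E) :
    ∫ y, ℓ (𝓕 w y) * ⟪Φ x, Φ y⟫ = ℓ (𝓕[μ] w x) := by
  have hint : Integrable fun y => 𝓕[μ] (1 : E → ℂ) (x - y) • 𝓕 w y := by
    have hcont : Continuous fun y => 𝓕[μ] (1 : E → ℂ) (x - y) :=
      (continuous_fourierIntegral (integrable_const 1)).comp (by fun_prop)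
    exact (𝓕 w).integrable.bdd_smul _ hcont.aestronglyMeasurable
      (.of_forall fun y => VectorFourier.norm_fourierIntegral_le_integral_norm _ _ _ _ _)
  calc ∫ y, ℓ (𝓕 w y) * ⟪Φ x, Φ y⟫
      = ∫ y, ℓ (𝓕[μ] (1 : E → ℂ) (x - y) • 𝓕 w y) := by
        simp only [hΦ, hψ, Complex.coe_smul, map_smul]
        simp only [smul_eq_mul, mul_comm]
    _ = ℓ (∫ y, 𝓕[μ] (1 : E → ℂ) (x - y) • 𝓕 w y) := ℓ.integral_comp_comm hint
    _ = ℓ (𝓕[μ] w x) := by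
        rw [integral_fourierIntegral_one_sub_smul (𝓕 w).integrable, ← SchwartzMap.fourierInv_coe,
          FourierTransform.fourierInv_fourier_eq]

theorem isC0Universal_of_isOpenPosMeasure [μ.IsOpenPosMeasure]
    (hψ : ∀ x, 𝓕[μ] (1 : E → ℂ) x = ψ x) (hψ0 : Tendsto ψ (cocompact E) (𝓝 0))
    (hΦ : ∀ x y, ⟪Φ x, Φ y⟫ = ψ (x - y)) : IsC0Universal Φ := by
  intro g ε hε
  let gc : C₀(E, ℂ) := ⟨⟨fun x => (g x : ℂ), by fun_prop⟩, by
    simpa [Function.comp_def] using (Complex.continuous_ofReal.tendsto 0).comp g.zero_at_infty'⟩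
  have hμ : Tendsto (𝓕[μ] (1 : E → ℂ)) (cocompact E) (𝓝 0) := by
    simpa [Function.comp_def, funext hψ] using
      (Complex.continuous_ofReal.tendsto 0).comp hψ0
  obtain ⟨w, hw⟩ := exists_schwartz_norm_fourierIntegral_sub_le hμ gc (half_pos hε)
  have hqint : Integrable fun y => Complex.reCLM (𝓕 w y) :=
    Complex.reCLM.integrable_comp (𝓕 w).integrable
  obtain ⟨f, hf⟩ := exists_forall_abs_inner_sub_integral_le
    (integrable_smul_of_inner_eq_sub (continuous_of_fourierIntegral_one_eq hψ) hΦ hqint)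
    (fun x => (norm_of_inner_eq_sub hΦ x).le) (half_pos hε)
  refine ⟨f, fun x => ?_⟩
  have hfx := hf x
  rw [integral_fourier_mul_inner hψ hΦ] at hfx
  have hre : |Complex.reCLM (𝓕[μ] w x) - g x| ≤ ε / 2 :=
    (Complex.abs_re_le_norm (𝓕[μ] w x - gc x)).trans (hw x)
  exact (abs_sub_le _ _ _).trans (by linarith)

theorem IsC0Universal.eq_zero_of_fourierIntegral_eq_zero (huniv : IsC0Universal Φ)
    (hψ : ∀ x, 𝓕[μ] (1 : E → ℂ) x = ψ x) (hΦ : ∀ x y, ⟪Φ x, Φ y⟫ = ψ (x - y))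
    {w : 𝓢(E, ℂ)} (hw : 𝓕[μ] w = 0) : w = 0 := by
  have hcomp (ℓ : ℂ →L[ℝ] ℝ) (y : E) : ℓ (𝓕 w y) = 0 := by
    let q : C₀(E, ℝ) := ⟨⟨fun y => ℓ (𝓕 w y), by fun_prop⟩, by
      simpa [Function.comp_def] using
        (ℓ.continuous.tendsto 0).comp (𝓕 w).toZeroAtInfty.zero_at_infty'⟩
    have hqint : Integrable q := ℓ.integrable_comp (𝓕 w).integrable
    have hq : q = 0 := huniv.eq_zero_of_integral_mul_inner_eq_zero hqint
      (integrable_smul_of_inner_eq_sub (continuous_of_fourierIntegral_one_eq hψ) hΦ hqint) fun x =>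
        (integral_fourier_mul_inner hψ hΦ ℓ w x).trans (by simp [hw])
    exact DFunLike.congr_fun hq y
  have hfourier : 𝓕 w = 0 := by
    ext y
    exact Complex.ext (hcomp Complex.reCLM y) (hcomp Complex.imCLM y)
  exact (FourierTransform.fourierCLE ℝ 𝓢(E, ℂ)).map_eq_zero_iff.1 hfourier

theorem IsC0Universal.isOpenPosMeasure (huniv : IsC0Universal Φ)
    (hψ : ∀ x, 𝓕[μ] (1 : E → ℂ) x = ψ x) (hΦ : ∀ x y, ⟪Φ x, Φ y⟫ = ψ (x - y)) :
    μ.IsOpenPosMeasure := by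
  refine ⟨fun U hU ⟨c, hc⟩ hμU => ?_⟩
  obtain ⟨r, hr, hrU⟩ := Metric.isOpen_iff.1 hU c hc
  let b : ContDiffBump c := ⟨r / 2, r, half_pos hr, half_lt_self hr⟩
  have hsupp : HasCompactSupport fun x => (b x : ℂ) :=
    b.hasCompactSupport.comp_left Complex.ofReal_zero
  let w : 𝓢(E, ℂ) := hsupp.toSchwartzMap (Complex.ofRealCLM.contDiff.comp b.contDiff)
  have hwU : (w : E → ℂ) =ᵐ[μ] 0 := by
    refine measure_mono_null (fun x hx => hrU ?_) hμU
    rw [← b.support_eq]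
    exact fun hbx => hx (congrArg Complex.ofReal hbx)
  have hw : 𝓕[μ] w = 0 := by
    rw [VectorFourier.fourierIntegral_congr_ae _ _ _ hwU]
    ext x
    simp [VectorFourier.fourierIntegral]
  have hwc : (b c : ℂ) = 0 :=
    DFunLike.congr_fun (huniv.eq_zero_of_fourierIntegral_eq_zero hψ hΦ hw) c
  exact b.pos_of_mem_ball (Metric.mem_ball_self hr) |>.ne' (Complex.ofReal_eq_zero.1 hwc)

theorem stmt7_general (hψ0 : Tendsto ψ (cocompact E) (𝓝 0))
    (hBochner : ∀ x, (ψ x : ℂ) = ∫ ω, Complex.exp (-(Complex.I * (⟪x, ω⟫ : ℝ))) ∂Λ)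
    (hΦ : ∀ x y, ⟪Φ x, Φ y⟫ = ψ (x - y)) :
    IsC0Universal Φ ↔ msupport Λ = Set.univ := by
  let e : E ≃ₜ E := Homeomorph.smulOfNeZero (2 * Real.pi)⁻¹ (by positivity)
  have hψ (x : E) : 𝓕[Λ.map e] (1 : E → ℂ) x = ψ x :=
    (fourierIntegral_one_map_smul Λ x).trans (hBochner x).symm
  rw [msupport_eq_univ_iff, ← isOpenPosMeasure_map_iff e]
  exact ⟨fun huniv => huniv.isOpenPosMeasure hψ hΦ,
    fun _ => isC0Universal_of_isOpenPosMeasure hψ hψ0 hΦ⟩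

end Bochner

/-- Let `ψ : ℝᵈ → ℝ` be a nonzero bounded continuous positive definite
function vanishing at infinity, let `Λ` be the finite nonnegative Borel measure with
`ψ(x) = ∫ e^{-i⟪x,ω⟫} dΛ(ω)` (Bochner), and let `k(x,y) = ψ(x−y)` with RKHS `H`.  Then
`k` is c₀-universal iff `supp(Λ) = ℝᵈ`. -/
theorem stmt7 {d : ℕ}
    (ψ : EuclideanSpace ℝ (Fin d) → ℝ) (hψne : ψ ≠ 0)
    (hψcont : Continuous ψ) (hψbdd : ∃ C : ℝ, ∀ x, |ψ x| ≤ C)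
    (hψ0 : Tendsto ψ (cocompact (EuclideanSpace ℝ (Fin d))) (𝓝 0))
    (Λ : Measure (EuclideanSpace ℝ (Fin d))) [IsFiniteMeasure Λ]
    (hBochner : ∀ x, (ψ x : ℂ) =
      ∫ ω, Complex.exp (-(Complex.I * (⟪x, ω⟫ : ℝ))) ∂Λ)
    (k : EuclideanSpace ℝ (Fin d) → EuclideanSpace ℝ (Fin d) → ℝ)
    (hkψ : ∀ x y, k x y = ψ (x - y))
    {H : Type*} [NormedAddCommGroup H] [InnerProductSpace ℝ H] [CompleteSpace H]
    (T : H →ₗ[ℝ] (EuclideanSpace ℝ (Fin d) → ℝ)) (hT : Function.Injective T)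
    (Φ : EuclideanSpace ℝ (Fin d) → H)
    (hk : ∀ x y, k x y = ⟪Φ x, Φ y⟫)
    (hrepro : ∀ (f : H) x, T f x = ⟪f, Φ x⟫) :
    (∀ (g : C₀(EuclideanSpace ℝ (Fin d), ℝ)) (ε : ℝ), 0 < ε →
        ∃ f : H, ∀ x, |T f x - g x| ≤ ε) ↔
      msupport Λ = Set.univ := by
  simp only [hrepro]
  exact stmt7_general hψ0 hBochner fun x y => (hk x y).symm.trans (hkψ x y)
end

section
/- Let ψ : ℝ^d → ℝ be a nonzero bounded continuous positive definite function, let Λ be the finite nonnegative Borel measure on ℝ^d with ψ(x) = ∫_{ℝ^d} e^{−i xᵀω} dΛ(ω) given by Bochner's theorem, and let k(x,y) = ψ(x − y). If the interior of supp(Λ) is nonempty, then k is cc-universal. -/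
open MeasureTheory Filter Topology RealInnerProductSpace

/-!
Fix a compact set `Z` and let `φ ω ∈ C(Z, ℂ)` be the character `x ↦ exp (i⟪x, ω⟫)` restricted to
`Z`. The Fourier transform of the vector-valued function `φ` with respect to `Λ` takes at `y` the
value `k(·, y)`. A continuous linear functional `L` on `C(Z, ℂ)` that kills every `k(·, y)` thus
makes the Fourier transform of `L ∘ φ` vanish, so `L ∘ φ` is zero `Λ`-almost everywhere, and by
continuity on all of `supp Λ`. Since `φ` is analytic and `supp Λ` has nonempty interior, the
identity theorem gives `L ∘ φ = 0`. By Stone-Weierstrass the characters span a dense subspace,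
hence `L = 0`, and Hahn-Banach shows that the `k(·, y)` span a dense subspace as well.
-/

section Support

variable {X : Type*} [TopologicalSpace X] [MeasurableSpace X] {μ : Measure X}

lemma msupport_eq_support : msupport μ = μ.support := by
  ext x
  simp only [msupport, Measure.support_eq_forall_isOpen, Set.mem_ofPred_eq, pos_iff_ne_zero]
  exact forall_congr' fun _ ↦ forall_comm

lemma eqOn_support_of_ae_eq {Y : Type*} [TopologicalSpace Y] [T2Space Y] {f g : X → Y}
    (hf : Continuous f) (hg : Continuous g) (h : f =ᵐ[μ] g) : Set.EqOn f g μ.support :=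
  Measure.support_subset_of_isClosed (isClosed_eq hf hg) h

end Support

lemma eq_of_ae_eq_of_analyticOnNhd {𝕜 E F : Type*} [NontriviallyNormedField 𝕜]
    [NormedAddCommGroup E] [NormedSpace 𝕜 E] [PreconnectedSpace E] [NormedAddCommGroup F]
    [NormedSpace 𝕜 F] [MeasurableSpace E] {μ : Measure E} {f g : E → F}
    (hf : AnalyticOnNhd 𝕜 f Set.univ) (hg : AnalyticOnNhd 𝕜 g Set.univ)
    (hμ : (interior μ.support).Nonempty) (h : f =ᵐ[μ] g) : f = g := by
  obtain ⟨x₀, hx₀⟩ := hμ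
  have hsupp : Set.EqOn f g μ.support := eqOn_support_of_ae_eq
    (continuousOn_univ.1 hf.continuousOn) (continuousOn_univ.1 hg.continuousOn) h
  exact hf.eq_of_eventuallyEq hg (hsupp.eventuallyEq_of_mem (mem_interior_iff_mem_nhds.1 hx₀))

section Density

lemma dense_of_forall_dual_eq_zero {𝕜 V : Type*} [RCLike 𝕜] [NormedAddCommGroup V]
    [NormedSpace 𝕜 V] (p : Submodule 𝕜 V)
    (h : ∀ L : StrongDual 𝕜 V, (∀ v ∈ p, L v = 0) → L = 0) : Dense (p : Set V) := by
  intro v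
  rw [← Submodule.topologicalClosure_coe, SetLike.mem_coe]
  have : IsClosed (p.topologicalClosure : Set V) := p.isClosed_topologicalClosure
  rw [← Submodule.Quotient.mk_eq_zero]
  refine SeparatingDual.eq_zero_of_forall_dual_eq_zero (R := 𝕜) fun g ↦ ?_
  have hg : g.comp p.topologicalClosure.mkQL = 0 := h _ fun w hw ↦ by
    have hw' : p.topologicalClosure.mkQL w = 0 :=
      (Submodule.Quotient.mk_eq_zero _).2 (p.le_topologicalClosure hw)
    rw [ContinuousLinearMap.comp_apply, hw', map_zero]
  exact DFunLike.congr_fun hg v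

variable {X : Type*} [TopologicalSpace X]

lemma dense_span_re_image {S : Set C(X, ℂ)} (hS : ∀ f ∈ S, IsSelfAdjoint f)
    (hdense : Dense (Submodule.span ℂ S : Set C(X, ℂ))) :
    Dense (Submodule.span ℝ (Complex.reCLM.compLeftContinuous ℝ X '' S) : Set C(X, ℝ)) := by
  set re := Complex.reCLM.compLeftContinuous ℝ X
  have hsurj : Function.Surjective re := fun g ↦
    ⟨Complex.ofRealCLM.compLeftContinuous ℝ X g, by ext x; simp [re]⟩
  -- Quantifying over `c` makes the claim stable under complex scalars; `re` is only `ℝ`-linear.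
  have hspan : ∀ p ∈ Submodule.span ℂ S, ∀ c : ℂ, re (c • p) ∈ Submodule.span ℝ (re '' S) := by
    intro p hp
    induction hp using Submodule.span_induction with
    | mem f hf =>
      intro c
      have hfc : re (c • f) = c.re • re f := by
        ext x
        have him : (f x).im = 0 := Complex.conj_eq_iff_im.1 (DFunLike.congr_fun (hS f hf) x)
        simp [re, him]
      rw [hfc]
      exact Submodule.smul_mem _ _ (Submodule.subset_span ⟨f, hf, rfl⟩)
    | zero => simp
    | add f g _ _ hf hg =>
      intro c
      have hadd : c • (f + g) = c • f + c • g := smul_add c f g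
      rw [hadd, map_add]
      exact add_mem (hf c) (hg c)
    | smul a f _ hf => exact fun c ↦ by simpa only [smul_smul] using hf (c * a)
  refine (hsurj.denseRange.dense_image re.continuous hdense).mono ?_
  rintro _ ⟨p, hp, rfl⟩
  exact one_smul ℂ p ▸ hspan p hp 1

lemma exists_inner_eq_of_mem_span {H : Type*} [NormedAddCommGroup H] [InnerProductSpace ℝ H]
    {Φ : X → H} {S : Set C(X, ℝ)} (hS : ∀ p ∈ S, ∃ f : H, ∀ x, ⟪f, Φ x⟫ = p x)
    {p : C(X, ℝ)} (hp : p ∈ Submodule.span ℝ S) : ∃ f : H, ∀ x, ⟪f, Φ x⟫ = p x := by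
  induction hp using Submodule.span_induction with
  | mem p hp => exact hS p hp
  | zero => exact ⟨0, fun x ↦ by simp⟩
  | add p q _ _ hp hq =>
    obtain ⟨f, hf⟩ := hp
    obtain ⟨g, hg⟩ := hq
    exact ⟨f + g, fun x ↦ by simp [inner_add_left, hf, hg]⟩
  | smul a p _ hp =>
    obtain ⟨f, hf⟩ := hp
    exact ⟨a • f, fun x ↦ by simp [real_inner_smul_left, hf]⟩

end Density

section FourierInjectivity

open VectorFourier ComplexConjugate

variable {E : Type*} [NormedAddCommGroup E] [InnerProductSpace ℝ E] [MeasurableSpace E]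
  {μ : Measure E}

lemma fourierIntegral_probChar_conj (G : E → ℂ) (t : E) :
    fourierIntegral Real.probChar μ (innerₗ E) (fun x ↦ conj (G x)) t =
      conj (fourierIntegral Real.probChar μ (innerₗ E) G (-t)) := by
  simp [fourierIntegral_probChar, ← integral_conj, ← Complex.exp_conj]

lemma charFun_withDensity_ofReal {G : E → ℝ} (hG : AEMeasurable G μ) (t : E) :
    charFun (μ.withDensity fun x ↦ ENNReal.ofReal (G x)) t =
      fourierIntegral Real.probChar μ (innerₗ E) (fun x ↦ (((G x)⁺ : ℝ) : ℂ)) (-t) := by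
  rw [charFun_apply, integral_withDensity_eq_integral_toReal_smul₀ hG.ennreal_ofReal (by simp)]
  simp [fourierIntegral_probChar, ENNReal.toReal_ofReal', posPart_def, mul_comm]

variable [BorelSpace E]

lemma fourierIntegral_probChar_re {G : E → ℂ} (hG : Integrable G μ) (t : E) :
    fourierIntegral Real.probChar μ (innerₗ E) (fun x ↦ ((G x).re : ℂ)) t =
      2⁻¹ * (fourierIntegral Real.probChar μ (innerₗ E) G t +
        conj (fourierIntegral Real.probChar μ (innerₗ E) G (-t))) := by
  have hconj : Integrable (fun x ↦ conj (G x)) μ :=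
    Complex.conjCLE.toContinuousLinearMap.integrable_comp hG
  have hre : (fun x ↦ ((G x).re : ℂ)) = (2⁻¹ : ℂ) • (G + fun x ↦ conj (G x)) := by
    funext x
    simp [Complex.add_conj]
  rw [hre, fourierIntegral_const_smul,
    fourierIntegral_add Real.continuous_probChar continuous_inner hG hconj]
  simp [fourierIntegral_probChar_conj]

variable [CompleteSpace E] [SecondCountableTopology E] [IsFiniteMeasure μ]

lemma ae_eq_zero_of_fourierIntegral_ofReal_eq_zero {G : E → ℝ} (hG : Integrable G μ)
    (h : ∀ t, fourierIntegral Real.probChar μ (innerₗ E) (fun x ↦ (G x : ℂ)) t = 0) :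
    G =ᵐ[μ] 0 := by
  have hneg : Integrable (fun x ↦ -G x) μ := hG.neg
  have := isFiniteMeasure_withDensity_ofReal hG.2
  have := isFiniteMeasure_withDensity_ofReal hneg.2
  have hsplit : (fun x ↦ (((G x)⁺ : ℝ) : ℂ)) =
      (fun x ↦ (G x : ℂ)) + fun x ↦ (((-G x)⁺ : ℝ) : ℂ) := by
    funext x
    rw [Pi.add_apply, ← Complex.ofReal_add, posPart_neg,
      ← sub_eq_iff_eq_add.1 (posPart_sub_negPart (G x))]
  have hmeasure : μ.withDensity (fun x ↦ ENNReal.ofReal (G x)) =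
      μ.withDensity (fun x ↦ ENNReal.ofReal (-G x)) := by
    refine Measure.ext_of_charFun (funext fun t ↦ ?_)
    rw [charFun_withDensity_ofReal hG.aemeasurable, charFun_withDensity_ofReal hneg.aemeasurable,
      hsplit, fourierIntegral_add Real.continuous_probChar continuous_inner hG.ofReal
        hneg.pos_part.ofReal, Pi.add_apply, h, zero_add]
  have hae := (withDensity_eq_iff_of_sigmaFinite hG.aemeasurable.ennreal_ofReal
    hneg.aemeasurable.ennreal_ofReal).1 hmeasure
  filter_upwards [hae] with x hx
  rw [Pi.zero_apply, ← max_zero_sub_max_neg_zero_eq_self (G x), sub_eq_zero]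
  simpa only [ENNReal.toReal_ofReal'] using congrArg ENNReal.toReal hx

lemma ae_eq_zero_of_fourierIntegral_eq_zero {G : E → ℂ} (hG : Integrable G μ)
    (h : ∀ t, fourierIntegral Real.probChar μ (innerₗ E) G t = 0) : G =ᵐ[μ] 0 := by
  have re_ae_eq_zero {F : E → ℂ} (hF : Integrable F μ)
      (hF0 : ∀ t, fourierIntegral Real.probChar μ (innerₗ E) F t = 0) :
      (fun x ↦ (F x).re) =ᵐ[μ] 0 :=
    ae_eq_zero_of_fourierIntegral_ofReal_eq_zero hF.re fun t ↦ by
      simpa [hF0] using fourierIntegral_probChar_re hF t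
  have him := re_ae_eq_zero (hG.smul Complex.I) fun t ↦ by
    rw [fourierIntegral_const_smul, Pi.smul_apply, h, smul_zero]
  filter_upwards [re_ae_eq_zero hG h, him] with x hre him
  exact Complex.ext hre (by simpa using him)

variable {F : Type*} [NormedAddCommGroup F] [NormedSpace ℂ F] [CompleteSpace F]

theorem dense_span_range_fourierIntegral {φ : E → F} (hφ : AnalyticOnNhd ℝ φ Set.univ)
    (hint : Integrable φ μ) (hμ : (interior μ.support).Nonempty)
    (hdense : Dense (Submodule.span ℂ (Set.range φ) : Set F)) :
    Dense (Submodule.span ℂ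
      (Set.range (fourierIntegral Real.probChar μ (innerₗ E) φ)) : Set F) := by
  refine dense_of_forall_dual_eq_zero _ fun L hL ↦ ?_
  have hfourier (t : E) : fourierIntegral Real.probChar μ (innerₗ E) (L ∘ φ) t = 0 := by
    rw [← hL _ (Submodule.subset_span ⟨t, rfl⟩), fourierIntegral, fourierIntegral,
      ← L.integral_comp_comm
        ((fourierIntegral_convergent_iff Real.continuous_probChar continuous_inner t).2 hint)]
    simp [Circle.smul_def]
  have hanalytic : AnalyticOnNhd ℝ (L ∘ φ) Set.univ :=
    (L.restrictScalars ℝ).comp_analyticOnNhd hφ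
  have hzero : L ∘ φ = 0 := eq_of_ae_eq_of_analyticOnNhd hanalytic analyticOnNhd_const hμ
    (ae_eq_zero_of_fourierIntegral_eq_zero (L.integrable_comp hint) hfourier)
  refine ContinuousLinearMap.ext_on hdense ?_
  rintro _ ⟨ω, rfl⟩
  exact congrFun hzero ω

end FourierInjectivity

section Characters

open VectorFourier BoundedContinuousFunction

variable {E : Type*} [NormedAddCommGroup E] [InnerProductSpace ℝ E]

/-- The character `x ↦ exp (⟪x, ω⟫ * I)` of `E`, as a continuous function on `Z`. The Fourier
transform of `charOn Z` consists of the translates of the characteristic function of a measure. -/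
noncomputable def charOn (Z : Set E) (ω : E) : C(Z, ℂ) :=
  (innerProbChar ω).toContinuousMap.restrict Z

variable {Z : Set E}

lemma charOn_apply (ω : E) (x : Z) : charOn Z ω x = Complex.exp (⟪(x : E), ω⟫ * Complex.I) := rfl

lemma dense_span_range_charOn [CompactSpace Z] :
    Dense (Submodule.span ℂ (Set.range (charOn Z)) : Set C(Z, ℂ)) := by
  let A : StarSubalgebra ℂ C(Z, ℂ) :=
    ((charPoly Real.continuous_probChar (L := innerₗ E) continuous_inner).map
      (toContinuousMapStarₐ ℂ)).map
        (ContinuousMap.compStarAlgHom' ℂ ℂ ⟨Subtype.val, continuous_subtype_val⟩)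
  have hsep : A.SeparatesPoints := fun x y hxy ↦ by
    obtain ⟨_, ⟨q, hq, rfl⟩, hqxy⟩ := separatesPoints_charPoly Real.continuous_probChar
      Real.probChar_ne_one (L := innerₗ E) continuous_inner
      (fun v hv ↦ DFunLike.ne_iff.2 ⟨v, inner_self_ne_zero.2 hv⟩) (Subtype.coe_ne_coe.2 hxy)
    exact ⟨_, ⟨_, ⟨q, hq, rfl⟩, rfl⟩, hqxy⟩
  have hA : Dense (A : Set C(Z, ℂ)) := by
    rw [dense_iff_closure_eq, ← StarSubalgebra.topologicalClosure_coe,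
      ContinuousMap.starSubalgebra_topologicalClosure_eq_top_of_separatesPoints A hsep,
      StarSubalgebra.coe_top]
  refine hA.mono ?_
  rintro _ ⟨_, ⟨q, hq, rfl⟩, rfl⟩
  obtain ⟨w, hw⟩ := (mem_charPoly q).1 hq
  have hsum : q.toContinuousMap.restrict Z = w.coeff.sum fun ω c ↦ c • charOn Z ω := by
    ext x
    rw [Finsupp.sum, ContinuousMap.sum_apply]
    exact congrFun hw x
  change q.toContinuousMap.restrict Z ∈ _
  rw [hsum]
  exact Submodule.sum_mem _ fun ω _ ↦ Submodule.smul_mem _ _ (Submodule.subset_span ⟨ω, rfl⟩)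

lemma norm_charOn_le [CompactSpace Z] (ω : E) : ‖charOn Z ω‖ ≤ 1 :=
  (ContinuousMap.norm_le _ zero_le_one).2 fun _ ↦ (Complex.norm_exp_ofReal_mul_I _).le

/-- The exponent `x ↦ ⟪x, ω⟫ * I` of `charOn Z ω`, as a continuous linear function of `ω`,
which exhibits `charOn Z` as an analytic map. -/
noncomputable def charOnExponent (Z : Set E) : E →L[ℝ] C(Z, ℂ) where
  toFun ω := ⟨fun x ↦ ⟪(x : E), ω⟫ * Complex.I, by fun_prop⟩
  map_add' ω η := by
    ext x
    simp [inner_add_right, add_mul]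
  map_smul' r ω := by
    ext x
    simp [inner_smul_right, mul_assoc]
  cont := ContinuousMap.continuous_of_continuous_uncurry _ (by dsimp [Function.uncurry]; fun_prop)

lemma charOn_eq_exp_charOnExponent [CompactSpace Z] (ω : E) :
    charOn Z ω = NormedSpace.exp (charOnExponent Z ω) := by
  ext x
  have := NormedSpace.map_exp (ContinuousMap.evalAlgHom ℂ ℂ x)
    (continuous_eval_const x) (charOnExponent Z ω)
  rw [charOn_apply, Complex.exp_eq_exp_ℂ]
  exact this.symm

lemma analyticOnNhd_charOn [CompactSpace Z] : AnalyticOnNhd ℝ (charOn Z) Set.univ := fun ω _ ↦ by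
  rw [funext charOn_eq_exp_charOnExponent]
  exact (NormedSpace.exp_analytic _).comp ((charOnExponent Z).analyticAt ω)

variable [CompactSpace Z] [MeasurableSpace E] [BorelSpace E] [SecondCountableTopology E]
  {μ : Measure E} [IsFiniteMeasure μ]

lemma integrable_charOn : Integrable (charOn Z) μ :=
  .of_bound (continuousOn_univ.1 analyticOnNhd_charOn.continuousOn).aestronglyMeasurable 1
    (Eventually.of_forall norm_charOn_le)

lemma fourierIntegral_charOn_apply (y : E) (x : Z) :
    fourierIntegral Real.probChar μ (innerₗ E) (charOn Z) y x = charFun μ (x - y) := by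
  have hint := (fourierIntegral_convergent_iff (L := innerₗ E) Real.continuous_probChar
    continuous_inner y).2 (integrable_charOn (μ := μ) (Z := Z))
  rw [fourierIntegral, ← ContinuousMap.evalCLM_apply ℂ x,
    ← (ContinuousMap.evalCLM ℂ x).integral_comp_comm hint, charFun_apply]
  congr with ω
  simp only [ContinuousMap.evalCLM_apply, ContinuousMap.smul_apply, charOn_apply, Circle.smul_def,
    Real.probChar_apply, innerₗ_apply_apply, smul_eq_mul, ← Complex.exp_add, inner_sub_right,
    real_inner_comm ω]
  congr 1
  push_cast
  ring

end Characters

lemma charFun_eq_ofReal {E : Type*} [NormedAddCommGroup E] [InnerProductSpace ℝ E]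
    [MeasurableSpace E] {μ : Measure E} {ψ : E → ℝ}
    (hψ : ∀ x, (ψ x : ℂ) = ∫ ω, Complex.exp (-(Complex.I * (⟪x, ω⟫ : ℝ))) ∂μ) (x : E) :
    charFun μ x = ψ x := by
  have hneg : charFun μ (-x) = ψ x := by
    rw [charFun_apply, hψ]
    simp [real_inner_comm, mul_comm]
  rw [← Complex.conj_ofReal, ← hneg, charFun_neg, Complex.conj_conj]

theorem stmt8_general {E : Type*} [NormedAddCommGroup E] [InnerProductSpace ℝ E] [CompleteSpace E]
    [SecondCountableTopology E] [MeasurableSpace E] [BorelSpace E]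
    (ψ : E → ℝ) (Λ : Measure E) [IsFiniteMeasure Λ]
    (hBochner : ∀ x, (ψ x : ℂ) = ∫ ω, Complex.exp (-(Complex.I * (⟪x, ω⟫ : ℝ))) ∂Λ)
    {H : Type*} [NormedAddCommGroup H] [InnerProductSpace ℝ H] (Φ : E → H)
    (hΦ : ∀ x y, ψ (x - y) = ⟪Φ x, Φ y⟫) (hsupp : (interior Λ.support).Nonempty)
    (Z : Set E) (hZ : IsCompact Z) (g : C(Z, ℝ)) (ε : ℝ) (hε : 0 < ε) :
    ∃ f : H, ∀ x : Z, |⟪f, Φ x⟫ - g x| ≤ ε := by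
  have : CompactSpace Z := isCompact_iff_compactSpace.1 hZ
  set K := VectorFourier.fourierIntegral Real.probChar Λ (innerₗ E) (charOn Z) with hK
  have hKψ (y : E) (x : Z) : K y x = ψ (x - y) := by
    rw [hK, fourierIntegral_charOn_apply, charFun_eq_ofReal hBochner]
  have hself : ∀ f ∈ Set.range K, IsSelfAdjoint f := by
    rintro _ ⟨y, rfl⟩
    refine ContinuousMap.ext fun x ↦ ?_
    rw [ContinuousMap.star_apply, hKψ]
    exact Complex.conj_ofReal _
  have hdense : Dense (Submodule.span ℂ (Set.range K) : Set C(Z, ℂ)) :=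
    dense_span_range_fourierIntegral analyticOnNhd_charOn integrable_charOn hsupp
      dense_span_range_charOn
  obtain ⟨p, hgp, hp⟩ := Metric.dense_iff.1 (dense_span_re_image hself hdense) g ε hε
  obtain ⟨f, hf⟩ : ∃ f : H, ∀ x : Z, ⟪f, Φ x⟫ = p x := by
    refine exists_inner_eq_of_mem_span ?_ hp
    rintro _ ⟨_, ⟨y, rfl⟩, rfl⟩
    exact ⟨Φ y, fun x ↦ by simp [hKψ, hΦ, real_inner_comm]⟩
  refine ⟨f, fun x ↦ ?_⟩
  rw [hf, ← Real.dist_eq]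
  exact (ContinuousMap.dist_apply_le_dist x).trans (Metric.mem_ball.1 hgp).le

/-- Let `ψ : ℝᵈ → ℝ` be a nonzero bounded continuous positive definite
function, let `Λ` be the finite nonnegative Borel measure with
`ψ(x) = ∫ e^{-i⟪x,ω⟫} dΛ(ω)` (Bochner), and let `k(x,y) = ψ(x−y)` with RKHS `H`.  If the
interior of `supp(Λ)` is nonempty, then `k` is cc-universal. -/
theorem stmt8 {d : ℕ}
    (ψ : EuclideanSpace ℝ (Fin d) → ℝ) (hψne : ψ ≠ 0)
    (hψcont : Continuous ψ) (hψbdd : ∃ C : ℝ, ∀ x, |ψ x| ≤ C)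
    (Λ : Measure (EuclideanSpace ℝ (Fin d))) [IsFiniteMeasure Λ]
    (hBochner : ∀ x, (ψ x : ℂ) =
      ∫ ω, Complex.exp (-(Complex.I * (⟪x, ω⟫ : ℝ))) ∂Λ)
    (k : EuclideanSpace ℝ (Fin d) → EuclideanSpace ℝ (Fin d) → ℝ)
    (hkψ : ∀ x y, k x y = ψ (x - y))
    {H : Type*} [NormedAddCommGroup H] [InnerProductSpace ℝ H] [CompleteSpace H]
    (T : H →ₗ[ℝ] (EuclideanSpace ℝ (Fin d) → ℝ)) (hT : Function.Injective T)
    (Φ : EuclideanSpace ℝ (Fin d) → H)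
    (hk : ∀ x y, k x y = ⟪Φ x, Φ y⟫)
    (hrepro : ∀ (f : H) x, T f x = ⟪f, Φ x⟫)
    (hsupp : (interior (msupport Λ)).Nonempty) :
    ∀ (Z : Set (EuclideanSpace ℝ (Fin d))), IsCompact Z →
      ∀ (g : C(Z, ℝ)) (ε : ℝ), 0 < ε →
        ∃ f : H, ∀ x : Z, |T f (x : EuclideanSpace ℝ (Fin d)) - g x| ≤ ε := by
  simp only [hrepro]
  rw [msupport_eq_support] at hsupp
  exact stmt8_general ψ Λ hBochner Φ (fun x y ↦ by rw [← hkψ, hk]) hsupp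
end
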